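/- Deterministic core of the oracle-inequality proof: let a₁, a₂ > 0, set s = √(log(ep)/n), τ = 2 a₁ σ (r_n + s) and λ̃ = 4 a₂ σ (r_n² + r_n s). Suppose f ∈ C_gr and the realization of ε satisfies (ε, f̂ − f)_n ≤ a₁ σ (r_n + s) ‖f̂ − f‖_n + a₂ σ (r_n² + r_n s) Ω̃_gr(f̂ − f), where Ω̃_gr(f̂ − f) is computed from the componentwise difference of the chosen representations of f̂ and f. Then ‖f̂ − f*‖²_n + 2 λ_n Ω_gr(f̂) + 2 μ_n G(f̂) ≤ 3 ‖f − f*‖²_n + 2 τ² + λ̃ [ Ω̃_gr(f̂) + Ω̃_gr(f) ] + 2 λ_n Ω_gr(f) + 2 μ_n G(f). -/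

import Mathlib

/-!
Comparing the objective at `f̂` and at `f` gives the basic inequality
`‖f̂ - f*‖² + λ Ω(f̂) + μ G(f̂) ≤ ‖f - f*‖² + 2 (ε, f̂ - f) + λ Ω(f) + μ G(f)`.
After doubling, the noise bound leaves `2 τ ‖f̂ - f‖ ≤ 2 τ² + ‖f̂ - f‖² / 2`, and
`‖f̂ - f‖² / 2 ≤ ‖f̂ - f*‖² + ‖f - f*‖²` is absorbed by the two sides. The remaining noise term is
handled by the triangle inequality for `Ω̃`, which holds because `√Ω` is the `L²` norm of the vector
of second-order partial derivatives.
-/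

open MeasureTheory ProbabilityTheory

noncomputable section

namespace Census

structure AddRep (p : ℕ) where
  main : Fin p → ℝ → ℝ
  inter : Fin p → Fin p → ℝ → ℝ → ℝ
  smooth_main : ∀ j, ContDiff ℝ 2 (main j)
  smooth_inter : ∀ j k, ContDiff ℝ 2 (fun q : ℝ × ℝ => inter j k q.1 q.2)

namespace AddRep
variable {p : ℕ}

def toFun (R : AddRep p) (x : Fin p → ℝ) : ℝ :=
  (∑ j, R.main j (x j)) + ∑ j, ∑ k, if j < k then R.inter j k (x j) (x k) else 0

def Gcount (R : AddRep p) : ℕ :=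
  Nat.card {j : Fin p // R.main j ≠ 0} +
    Nat.card {q : Fin p × Fin p // q.1 < q.2 ∧ R.inter q.1 q.2 ≠ 0}

end AddRep

def Omega1 (h : ℝ → ℝ) : ℝ := ∫ u in (0:ℝ)..1, (iteratedDeriv 2 h u) ^ 2

def Omega2 (g : ℝ → ℝ → ℝ) : ℝ :=
  ∫ q in (Set.Icc (0:ℝ) 1) ×ˢ (Set.Icc (0:ℝ) 1),
    ((iteratedDeriv 2 (fun t => g t q.2) q.1) ^ 2
      + (deriv (fun t => deriv (g t) q.2) q.1) ^ 2
      + (iteratedDeriv 2 (g q.1) q.2) ^ 2)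

def OmegaGr {p : ℕ} (R : AddRep p) : ℝ :=
  (∑ j, Omega1 (R.main j)) + ∑ j, ∑ k, if j < k then Omega2 (R.inter j k) else 0

def OmegaTildeGr {p : ℕ} (R : AddRep p) : ℝ :=
  (∑ j, Real.sqrt (Omega1 (R.main j))) +
    ∑ j, ∑ k, if j < k then Real.sqrt (Omega2 (R.inter j k)) else 0

def evalVec {n p : ℕ} (x : Fin n → Fin p → ℝ) (R : AddRep p) : Fin n → ℝ :=
  fun i => R.toFun (x i)

def normSqN {n : ℕ} (v : Fin n → ℝ) : ℝ := (1 / n) * ∑ i, v i ^ 2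

def normN {n : ℕ} (v : Fin n → ℝ) : ℝ := Real.sqrt (normSqN v)

def innerN {n : ℕ} (u v : Fin n → ℝ) : ℝ := (1 / n) * ∑ i, u i * v i

def objective {n p : ℕ} (x : Fin n → Fin p → ℝ) (y : Fin n → ℝ) (lam mu : ℝ)
    (R : AddRep p) : ℝ :=
  normSqN (fun i => y i - evalVec x R i) + lam * OmegaGr R + mu * (R.Gcount : ℝ)

def IsMinimizer {n p : ℕ} (K : ℕ) (x : Fin n → Fin p → ℝ) (y : Fin n → ℝ)
    (lam mu : ℝ) (Rhat : AddRep p) : Prop :=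
  Rhat.Gcount ≤ K ∧ ∀ R : AddRep p, R.Gcount ≤ K →
    objective x y lam mu Rhat ≤ objective x y lam mu R

def rn (n : ℕ) : ℝ := (n : ℝ) ^ (-(1/3) : ℝ)

def logep (p : ℕ) : ℝ := Real.log (Real.exp 1 * p)

def gaussMeasure (n : ℕ) (σ : ℝ) : Measure (Fin n → ℝ) :=
  Measure.pi fun _ : Fin n => gaussianReal 0 ⟨σ ^ 2, sq_nonneg σ⟩

end Census

namespace Census

/-- `Ω̃_gr` of the componentwise difference of two chosen representations. -/
def OmegaTildeSub {p : ℕ} (R1 R2 : AddRep p) : ℝ :=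
  (∑ j, Real.sqrt (Omega1 (fun u => R1.main j u - R2.main j u))) +
    ∑ j, ∑ k, if j < k then
      Real.sqrt (Omega2 (fun u v => R1.inter j k u v - R2.inter j k u v)) else 0

end Census

namespace Census

section SquareIntegral

variable {X E : Type*} [MeasurableSpace X] {μ : Measure X} [NormedAddCommGroup E] {F G : X → E}

lemma lpNorm_two_eq_sqrt_integral (hF : AEStronglyMeasurable F μ) :
    lpNorm F 2 μ = √(∫ x, ‖F x‖ ^ 2 ∂μ) := by
  rw [lpNorm_eq_integral_norm_rpow_toReal two_ne_zero ENNReal.ofNat_ne_top hF, Real.sqrt_eq_rpow]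
  simp

lemma sqrt_integral_norm_sub_sq_le (hF : MemLp F 2 μ) (hG : MemLp G 2 μ) :
    √(∫ x, ‖F x - G x‖ ^ 2 ∂μ) ≤ √(∫ x, ‖F x‖ ^ 2 ∂μ) + √(∫ x, ‖G x‖ ^ 2 ∂μ) := by
  rw [← lpNorm_two_eq_sqrt_integral hF.1, ← lpNorm_two_eq_sqrt_integral hG.1]
  exact (lpNorm_two_eq_sqrt_integral (hF.1.sub hG.1)).ge.trans (lpNorm_sub_le hF one_le_two)

variable [TopologicalSpace X] [OpensMeasurableSpace X] [IsFiniteMeasureOnCompacts μ]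

lemma memLp_restrict_of_isCompact [SecondCountableTopologyEither X E] {r : ENNReal}
    {K : Set X} (hK : IsCompact K) (hKm : MeasurableSet K) (hF : ContinuousOn F K) :
    MemLp F r (μ.restrict K) := by
  have : IsFiniteMeasure (μ.restrict K) := isFiniteMeasure_restrict.2 hK.measure_ne_top
  obtain ⟨C, hC⟩ := hK.exists_bound_of_continuousOn hF
  exact .of_bound (hF.aestronglyMeasurable hKm) C (ae_restrict_of_forall_mem hKm hC)

end SquareIntegral

section PartialDerivatives

variable {𝕜 V : Type*} [NontriviallyNormedField 𝕜] [NormedAddCommGroup V] [NormedSpace 𝕜 V]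

/-- The partial derivative `∂g/∂u` of a curried function `g(u, v)`. -/
def partialFst (g : 𝕜 → 𝕜 → V) (u v : 𝕜) : V := deriv (fun t => g t v) u

/-- The partial derivative `∂g/∂v` of a curried function `g(u, v)`. -/
def partialSnd (g : 𝕜 → 𝕜 → V) (u v : 𝕜) : V := deriv (g u) v

variable {f g : 𝕜 → 𝕜 → V} {m n : WithTop ℕ∞}

lemma contDiff_partialFst (hg : ContDiff 𝕜 n g.uncurry) (hmn : m + 1 ≤ n) :
    ContDiff 𝕜 m (partialFst g).uncurry := by
  have hg' : ContDiff 𝕜 n (fun q : (𝕜 × 𝕜) × 𝕜 => g q.2 q.1.2) :=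
    hg.comp (contDiff_snd.prodMk (contDiff_snd.comp contDiff_fst))
  exact ContDiff.fderiv_apply (f := fun (q : 𝕜 × 𝕜) t => g t q.2) hg' contDiff_fst
    contDiff_const hmn

lemma contDiff_partialSnd (hg : ContDiff 𝕜 n g.uncurry) (hmn : m + 1 ≤ n) :
    ContDiff 𝕜 m (partialSnd g).uncurry := by
  have hg' : ContDiff 𝕜 n (fun q : (𝕜 × 𝕜) × 𝕜 => g q.1.1 q.2) :=
    hg.comp ((contDiff_fst.comp contDiff_fst).prodMk contDiff_snd)
  exact ContDiff.fderiv_apply (f := fun (q : 𝕜 × 𝕜) t => g q.1 t) hg' contDiff_snd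
    contDiff_const hmn

lemma partialFst_sub (hf : Differentiable 𝕜 f.uncurry) (hg : Differentiable 𝕜 g.uncurry) :
    partialFst (f - g) = partialFst f - partialFst g := by
  ext u v
  have hslice {h : 𝕜 → 𝕜 → V} (hh : Differentiable 𝕜 h.uncurry) :
      DifferentiableAt 𝕜 (fun t => h t v) u :=
    (hh (u, v)).comp u (f := fun t => (t, v)) (by fun_prop)
  exact deriv_fun_sub (hslice hf) (hslice hg)

lemma partialSnd_sub (hf : Differentiable 𝕜 f.uncurry) (hg : Differentiable 𝕜 g.uncurry) :
    partialSnd (f - g) = partialSnd f - partialSnd g := by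
  ext u v
  have hslice {h : 𝕜 → 𝕜 → V} (hh : Differentiable 𝕜 h.uncurry) : DifferentiableAt 𝕜 (h u) v :=
    (hh (u, v)).comp v (f := fun t => (u, t)) (by fun_prop)
  exact deriv_sub (hslice hf) (hslice hg)

end PartialDerivatives

section Roughness

/-- The second-order partial derivatives of `g`, with the mixed one listed once, as a Euclidean
vector, so that its squared norm is the integrand of `Omega2 g`. -/
def secondPartials (g : ℝ → ℝ → ℝ) (q : ℝ × ℝ) : EuclideanSpace ℝ (Fin 3) :=
  !₂[(partialFst (partialFst g)).uncurry q, (partialFst (partialSnd g)).uncurry q,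
    (partialSnd (partialSnd g)).uncurry q]

lemma continuous_secondPartials {g : ℝ → ℝ → ℝ} (hg : ContDiff ℝ 2 g.uncurry) :
    Continuous (secondPartials g) := by
  have hu : ContDiff ℝ 1 (partialFst g).uncurry := contDiff_partialFst hg one_add_one_eq_two.le
  have hv : ContDiff ℝ 1 (partialSnd g).uncurry := contDiff_partialSnd hg one_add_one_eq_two.le
  have huu := (contDiff_partialFst hu (zero_add 1).le).continuous
  have huv := (contDiff_partialFst hv (zero_add 1).le).continuous
  have hvv := (contDiff_partialSnd hv (zero_add 1).le).continuous
  unfold secondPartials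
  fun_prop

lemma secondPartials_sub {f g : ℝ → ℝ → ℝ} (hf : ContDiff ℝ 2 f.uncurry)
    (hg : ContDiff ℝ 2 g.uncurry) :
    secondPartials (f - g) = secondPartials f - secondPartials g := by
  have hu {h : ℝ → ℝ → ℝ} (hh : ContDiff ℝ 2 h.uncurry) :
      Differentiable ℝ (partialFst h).uncurry :=
    (contDiff_partialFst hh one_add_one_eq_two.le).differentiable one_ne_zero
  have hv {h : ℝ → ℝ → ℝ} (hh : ContDiff ℝ 2 h.uncurry) :
      Differentiable ℝ (partialSnd h).uncurry :=
    (contDiff_partialSnd hh one_add_one_eq_two.le).differentiable one_ne_zero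
  have hf' := hf.differentiable two_ne_zero
  have hg' := hg.differentiable two_ne_zero
  ext q i
  fin_cases i <;>
    simp [secondPartials, Function.uncurry, partialFst_sub hf' hg', partialSnd_sub hf' hg',
      partialFst_sub (hu hf) (hu hg), partialFst_sub (hv hf) (hv hg),
      partialSnd_sub (hv hf) (hv hg)]

lemma omega1_eq_setIntegral (h : ℝ → ℝ) :
    Omega1 h = ∫ u in Set.Icc (0 : ℝ) 1, ‖iteratedDeriv 2 h u‖ ^ 2 := by
  simp only [Omega1, Real.norm_eq_abs, sq_abs, integral_Icc_eq_integral_Ioc,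
    intervalIntegral.integral_of_le zero_le_one]

lemma omega2_eq_setIntegral (g : ℝ → ℝ → ℝ) :
    Omega2 g = ∫ q in Set.Icc (0 : ℝ) 1 ×ˢ Set.Icc (0 : ℝ) 1, ‖secondPartials g q‖ ^ 2 := by
  simp only [Omega2, secondPartials, EuclideanSpace.real_norm_sq_eq, Fin.sum_univ_three,
    iteratedDeriv_succ, iteratedDeriv_zero]
  rfl

lemma sqrt_omega1_sub_le {f g : ℝ → ℝ} (hf : ContDiff ℝ 2 f) (hg : ContDiff ℝ 2 g) :
    √(Omega1 (f - g)) ≤ √(Omega1 f) + √(Omega1 g) := by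
  have hmem {h : ℝ → ℝ} (hh : ContDiff ℝ 2 h) :
      MemLp (iteratedDeriv 2 h) 2 (volume.restrict (Set.Icc 0 1)) :=
    memLp_restrict_of_isCompact isCompact_Icc measurableSet_Icc
      (hh.continuous_iteratedDeriv 2 le_rfl).continuousOn
  simp only [omega1_eq_setIntegral, iteratedDeriv_sub hf.contDiffAt hg.contDiffAt]
  exact sqrt_integral_norm_sub_sq_le (hmem hf) (hmem hg)

lemma sqrt_omega2_sub_le {f g : ℝ → ℝ → ℝ} (hf : ContDiff ℝ 2 f.uncurry)
    (hg : ContDiff ℝ 2 g.uncurry) :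
    √(Omega2 (f - g)) ≤ √(Omega2 f) + √(Omega2 g) := by
  have hmem {h : ℝ → ℝ → ℝ} (hh : ContDiff ℝ 2 h.uncurry) :
      MemLp (secondPartials h) 2 (volume.restrict (Set.Icc 0 1 ×ˢ Set.Icc 0 1)) :=
    memLp_restrict_of_isCompact (isCompact_Icc.prod isCompact_Icc)
      (measurableSet_Icc.prod measurableSet_Icc) (continuous_secondPartials hh).continuousOn
  simp only [omega2_eq_setIntegral, secondPartials_sub hf hg]
  exact sqrt_integral_norm_sub_sq_le (hmem hf) (hmem hg)

lemma omegaTildeSub_le {p : ℕ} (R₁ R₂ : AddRep p) :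
    OmegaTildeSub R₁ R₂ ≤ OmegaTildeGr R₁ + OmegaTildeGr R₂ := by
  unfold OmegaTildeSub OmegaTildeGr
  rw [add_add_add_comm]
  simp only [← Finset.sum_add_distrib]
  gcongr with j _ k _
  · exact sqrt_omega1_sub_le (R₁.smooth_main j) (R₂.smooth_main j)
  · split_ifs
    · exact sqrt_omega2_sub_le (R₁.smooth_inter j k) (R₂.smooth_inter j k)
    · simp

end Roughness

section EmpiricalNorm

variable {n : ℕ} (u v w : Fin n → ℝ)

lemma normSqN_nonneg : 0 ≤ normSqN u := by
  unfold normSqN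
  positivity

lemma sq_normN : normN u ^ 2 = normSqN u := Real.sq_sqrt (normSqN_nonneg u)

lemma innerN_sub_right : innerN u (v - w) = innerN u v - innerN u w := by
  simp only [innerN, Pi.sub_apply, mul_sub, Finset.sum_sub_distrib]

lemma normSqN_sub : normSqN (u - v) = normSqN u - 2 * innerN u v + normSqN v := by
  simp only [normSqN, innerN, Pi.sub_apply, sub_sq, Finset.sum_add_distrib,
    Finset.sum_sub_distrib, mul_assoc, ← Finset.mul_sum]
  ring

lemma normSqN_add : normSqN (u + v) = normSqN u + 2 * innerN u v + normSqN v := by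
  simp only [normSqN, innerN, Pi.add_apply, add_sq, Finset.sum_add_distrib, mul_assoc,
    ← Finset.mul_sum]
  ring

lemma normSqN_sub_le : normSqN (u - v) ≤ 2 * normSqN u + 2 * normSqN v := by
  linarith [normSqN_sub u v, normSqN_add u v, normSqN_nonneg (u + v)]

end EmpiricalNorm

lemma basic_inequality_of_objective_le {n p : ℕ} {x : Fin n → Fin p → ℝ}
    {fstar ε : Fin n → ℝ} {lam mu : ℝ} {Rhat R : AddRep p}
    (hobj : objective x (fstar + ε) lam mu Rhat ≤ objective x (fstar + ε) lam mu R) :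
    normSqN (evalVec x Rhat - fstar) + lam * OmegaGr Rhat + mu * Rhat.Gcount ≤
      normSqN (evalVec x R - fstar) + 2 * innerN ε (evalVec x Rhat - evalVec x R)
        + lam * OmegaGr R + mu * R.Gcount := by
  have hresidual (S : AddRep p) : objective x (fstar + ε) lam mu S =
      normSqN ε - 2 * innerN ε (evalVec x S - fstar) + normSqN (evalVec x S - fstar)
        + lam * OmegaGr S + mu * S.Gcount := by
    rw [← normSqN_sub, sub_sub_eq_add_sub, add_comm ε]
    rfl
  rw [hresidual, hresidual] at hobj
  have hinner : innerN ε (evalVec x Rhat - evalVec x R) =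
      innerN ε (evalVec x Rhat - fstar) - innerN ε (evalVec x R - fstar) := by
    rw [← innerN_sub_right, sub_sub_sub_cancel_right]
  linarith

lemma rn_nonneg (n : ℕ) : 0 ≤ rn n := Real.rpow_nonneg n.cast_nonneg _

end Census

open Census in
theorem statement9_general {n p : ℕ} {x : Fin n → Fin p → ℝ} {fstar ε : Fin n → ℝ}
    {lam mu A B τ lamTilde : ℝ} (hτ : τ = 2 * A) (hlamTilde : lamTilde = 4 * B) (hB : 0 ≤ B)
    {Rhat R : AddRep p}
    (hobj : objective x (fstar + ε) lam mu Rhat ≤ objective x (fstar + ε) lam mu R)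
    (hnoise : innerN ε (evalVec x Rhat - evalVec x R) ≤
      A * normN (evalVec x Rhat - evalVec x R) + B * OmegaTildeSub Rhat R) :
    normSqN (evalVec x Rhat - fstar) + 2 * lam * OmegaGr Rhat + 2 * mu * Rhat.Gcount ≤
      3 * normSqN (evalVec x R - fstar) + 2 * τ ^ 2
        + lamTilde * (OmegaTildeGr Rhat + OmegaTildeGr R)
        + 2 * lam * OmegaGr R + 2 * mu * R.Gcount := by
  have hbasic := basic_inequality_of_objective_le hobj
  have hrough : B * OmegaTildeSub Rhat R ≤ B * (OmegaTildeGr Rhat + OmegaTildeGr R) :=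
    mul_le_mul_of_nonneg_left (omegaTildeSub_le Rhat R) hB
  set D := normN (evalVec x Rhat - evalVec x R) with hD
  have hyoung : 2 * τ * D ≤ 2 * τ ^ 2 + D ^ 2 / 2 := by linarith [sq_nonneg (2 * τ - D)]
  have hdist : D ^ 2 ≤
      2 * normSqN (evalVec x Rhat - fstar) + 2 * normSqN (evalVec x R - fstar) := by
    rw [hD, sq_normN, ← sub_sub_sub_cancel_right _ _ fstar]
    exact normSqN_sub_le _ _
  subst hτ hlamTilde
  linarith

open Census in
/-- deterministic core of the oracle-inequality proof.  With
`s = √(log(ep)/n)`, `τ = 2a₁σ(rₙ+s)` and `λ̃ = 4a₂σ(rₙ²+rₙs)`, if the noise realization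
satisfies `(ε, f̂-f)ₙ ≤ a₁σ(rₙ+s)‖f̂-f‖ₙ + a₂σ(rₙ²+rₙs)Ω̃_gr(f̂-f)`, then
`‖f̂-f*‖ₙ² + 2λₙΩ_gr(f̂) + 2μₙG(f̂)
  ≤ 3‖f-f*‖ₙ² + 2τ² + λ̃[Ω̃_gr(f̂)+Ω̃_gr(f)] + 2λₙΩ_gr(f) + 2μₙG(f)`. -/
theorem statement9 (n p K : ℕ) (hn : 1 ≤ n) (hp : 1 ≤ p) (hK : 1 ≤ K)
    (x : Fin n → Fin p → ℝ) (hx : ∀ i j, x i j ∈ Set.Icc (0:ℝ) 1)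
    (σ : ℝ) (hσ : 0 < σ)
    (fstar ε : Fin n → ℝ) (lam mu : ℝ) (hlam : 0 < lam) (hmu : 0 < mu)
    (Rhat : AddRep p)
    (hmin : IsMinimizer K x (fun i => fstar i + ε i) lam mu Rhat)
    (R : AddRep p) (hR : R.Gcount ≤ K)
    (a₁ a₂ : ℝ) (ha₁ : 0 < a₁) (ha₂ : 0 < a₂)
    (s τ lamTilde : ℝ)
    (hs : s = Real.sqrt (logep p / n))
    (hτ : τ = 2 * a₁ * σ * (rn n + s))
    (hlamTilde : lamTilde = 4 * a₂ * σ * (rn n ^ 2 + rn n * s))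
    (hnoise : innerN ε (fun i => evalVec x Rhat i - evalVec x R i) ≤
      a₁ * σ * (rn n + s) * normN (fun i => evalVec x Rhat i - evalVec x R i)
        + a₂ * σ * (rn n ^ 2 + rn n * s) * OmegaTildeSub Rhat R) :
    normSqN (fun i => evalVec x Rhat i - fstar i)
        + 2 * lam * OmegaGr Rhat + 2 * mu * (Rhat.Gcount : ℝ) ≤
      3 * normSqN (fun i => evalVec x R i - fstar i) + 2 * τ ^ 2
        + lamTilde * (OmegaTildeGr Rhat + OmegaTildeGr R)
        + 2 * lam * OmegaGr R + 2 * mu * (R.Gcount : ℝ) := by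
  have hs₀ : 0 ≤ s := hs ▸ Real.sqrt_nonneg _
  have hrn : 0 ≤ rn n := rn_nonneg n
  exact statement9_general (hτ.trans (by ring)) (hlamTilde.trans (by ring)) (by positivity)
    (hmin.2 R hR) hnoise
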